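/- Let M be a task model and Δ(M) its set of minimal transitions (one pattern transition x ← P for each pattern node of M, and one expression transition x ← e for each expression node of M), partially ordered by dependency: a transition at variable x may only be triggered after the transition introducing x has been traversed, and an expression transition x ← e may only be triggered after all variables used by e have been introduced. Then every total ordering of Δ(M) compatible with this partial ordering yields a valid sequence of minimal transitions leading from the initial task model M₀ = (x₁ : ?, x₂ : ?) to M, i.e., applying the transitions in any such order produces well-formed task models at every intermediate step and ends at M. -/

import Mathlib

/-- A k-ary pattern: a relation between a whole value and a list of part values,
such that the whole is unique given the parts. -/
structure Pattern (V : Type) where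
  rel : V → List V → Prop
  functional : ∀ (vs : List V) (v v' : V), rel v vs → rel v' vs → v = v'

/-- A model: a finite tree whose nodes carry variables (naturals) and are either
unknowns, expressions, or pattern nodes with submodels. -/
inductive Model (V E : Type) : Type where
  | unknown : ℕ → Model V E
  | expr : ℕ → E → Model V E
  | pat : ℕ → Pattern V → List (Model V E) → Model V E

/-- A description: a finite tree assigning a value to each variable. -/
inductive Descr (V : Type) : Type where
  | atom : ℕ → V → Descr V
  | comp : ℕ → V → Pattern V → List (Descr V) → Descr V

def Descr.value {V : Type} : Descr V → V
  | .atom _ v => v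
  | .comp _ v _ _ => v

def Descr.rootVar {V : Type} : Descr V → ℕ
  | .atom x _ => x
  | .comp x _ _ _ => x

def Model.rootVar {V E : Type} : Model V E → ℕ
  | .unknown x => x
  | .expr x _ => x
  | .pat x _ _ => x

/-- Variables of a model. -/
def Model.vars {V E : Type} : Model V E → List ℕ
  | .unknown x => [x]
  | .expr x _ => [x]
  | .pat x _ ms => x :: (ms.attach.map (fun m => m.1.vars)).flatten
decreasing_by
  simp_wf
  have := List.sizeOf_lt_of_mem m.2
  omega

/-- Variables of a description. -/
def Descr.vars {V : Type} : Descr V → List ℕ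
  | .atom x _ => [x]
  | .comp x _ _ ds => x :: (ds.attach.map (fun d => d.1.vars)).flatten
decreasing_by
  simp_wf
  have := List.sizeOf_lt_of_mem d.2
  omega

/-- The generation relation `d ∈ m[σ]`, parameterized by a partial evaluation
function for expressions. -/
inductive Gen {V E : Type} (ev : E → (ℕ → Option V) → Option V) :
    Model V E → (ℕ → Option V) → Descr V → Prop where
  | unknown (x : ℕ) (σ : ℕ → Option V) (v : V) :
      Gen ev (.unknown x) σ (.atom x v)
  | expr (x : ℕ) (e : E) (σ : ℕ → Option V) (v : V) :
      ev e σ = some v → Gen ev (.expr x e) σ (.atom x v)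
  | pat (x : ℕ) (P : Pattern V) (ms : List (Model V E)) (σ : ℕ → Option V)
      (v : V) (ds : List (Descr V)) :
      ms.length = ds.length →
      P.rel v (ds.map Descr.value) →
      (∀ (i : ℕ) (h₁ : i < ms.length) (h₂ : i < ds.length),
        Gen ev (ms.get ⟨i, h₁⟩) σ (ds.get ⟨i, h₂⟩)) →
      Gen ev (.pat x P ms) σ (.comp x v P ds)

/-- `Model.Splits m x f c`: the variable `x` occurs in `m`, the `x`-factor (subtree
rooted at `x`) is `f`, and the `x`-context (with the subtree at `x` replaced by an
unknown) is `c`. -/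
inductive Model.Splits {V E : Type} : Model V E → ℕ → Model V E → Model V E → Prop where
  | here (m : Model V E) : Model.Splits m m.rootVar m (.unknown m.rootVar)
  | there (y : ℕ) (P : Pattern V) (ms : List (Model V E)) (i : ℕ) (h : i < ms.length)
      (x : ℕ) (f c : Model V E) :
      Model.Splits (ms.get ⟨i, h⟩) x f c →
      Model.Splits (.pat y P ms) x f (.pat y P (ms.set i c))

/-- `Descr.Splits d x f c`: the variable `x` occurs in `d`, the `x`-factor is `f`,
and the `x`-context (subtree at `x` replaced by an atomic description carrying the
value at `x`) is `c`. -/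
inductive Descr.Splits {V : Type} : Descr V → ℕ → Descr V → Descr V → Prop where
  | here (d : Descr V) : Descr.Splits d d.rootVar d (.atom d.rootVar d.value)
  | there (y : ℕ) (v : V) (P : Pattern V) (ds : List (Descr V)) (i : ℕ) (h : i < ds.length)
      (x : ℕ) (f c : Descr V) :
      Descr.Splits (ds.get ⟨i, h⟩) x f c →
      Descr.Splits (.comp y v P ds) x f (.comp y v P (ds.set i c))

/-- `Model.ReplaceAt m x m₀ m'`: the model `m'` results from `m` by replacing the
unknown leaf carrying variable `x` by the submodel `m₀` (i.e. `m' = m[x ← m₀]`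
where `m.x` is an unknown). -/
inductive Model.ReplaceAt {V E : Type} : Model V E → ℕ → Model V E → Model V E → Prop where
  | here (x : ℕ) (m₀ : Model V E) : Model.ReplaceAt (.unknown x) x m₀ m₀
  | there (y : ℕ) (P : Pattern V) (ms : List (Model V E)) (i : ℕ) (h : i < ms.length)
      (x : ℕ) (m₀ r : Model V E) :
      Model.ReplaceAt (ms.get ⟨i, h⟩) x m₀ r →
      Model.ReplaceAt (.pat y P ms) x m₀ (.pat y P (ms.set i r))

/-- The expressions occurring in a model. -/
def Model.exprs {V E : Type} : Model V E → List E
  | .unknown _ => []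
  | .expr _ e => [e]
  | .pat _ _ ms => (ms.attach.map (fun m => m.1.exprs)).flatten
decreasing_by
  simp_wf
  have := List.sizeOf_lt_of_mem m.2
  omega

/-- A task model: a pair of an input model and an output model. -/
structure TaskModel (V E : Type) where
  input : Model V E
  output : Model V E

/-- Well-formedness of a task model (relative to a function `exprVars` giving the
variables used by an expression): the variables of the two models are pairwise
distinct, and every expression (in particular every expression of the output
model) only uses variables introduced in the input model. -/
def TaskModel.Wf {V E : Type} (exprVars : E → List ℕ) (M : TaskModel V E) : Prop :=
  (M.input.vars ++ M.output.vars).Nodup ∧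
  (∀ e ∈ M.input.exprs, ∀ y ∈ exprVars e, y ∈ M.input.vars) ∧
  (∀ e ∈ M.output.exprs, ∀ y ∈ exprVars e, y ∈ M.input.vars)

/-- Minimal transitions between task models: replacing an unknown leaf `(x : ?)`
of the input or output model either by `P(x₁ : ?, …, x_k : ?)` for a pattern `P`
with fresh variables `x₁,…,x_k`, or by a well-defined expression `e`, i.e. one all
of whose variables are introduced in the input model. -/
inductive MinStep {V E : Type} (exprVars : E → List ℕ) :
    TaskModel V E → TaskModel V E → Prop where
  | patInput (M : TaskModel V E) (x : ℕ) (P : Pattern V) (xs : List ℕ) (mi' : Model V E) :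
      xs.Nodup →
      (∀ y ∈ xs, y ∉ M.input.vars ∧ y ∉ M.output.vars) →
      Model.ReplaceAt M.input x (.pat x P (xs.map .unknown)) mi' →
      MinStep exprVars M ⟨mi', M.output⟩
  | patOutput (M : TaskModel V E) (x : ℕ) (P : Pattern V) (xs : List ℕ) (mo' : Model V E) :
      xs.Nodup →
      (∀ y ∈ xs, y ∉ M.input.vars ∧ y ∉ M.output.vars) →
      Model.ReplaceAt M.output x (.pat x P (xs.map .unknown)) mo' →
      MinStep exprVars M ⟨M.input, mo'⟩
  | exprInput (M : TaskModel V E) (x : ℕ) (e : E) (mi' : Model V E) :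
      (∀ y ∈ exprVars e, y ∈ M.input.vars) →
      Model.ReplaceAt M.input x (.expr x e) mi' →
      MinStep exprVars M ⟨mi', M.output⟩
  | exprOutput (M : TaskModel V E) (x : ℕ) (e : E) (mo' : Model V E) :
      (∀ y ∈ exprVars e, y ∈ M.input.vars) →
      Model.ReplaceAt M.output x (.expr x e) mo' →
      MinStep exprVars M ⟨M.input, mo'⟩

/-- A minimal-transition specification: either a pattern transition `x ← P`
(recording the variables of the fresh all-unknown children), or an expression
transition `x ← e`. -/
inductive TransSpec (V E : Type) : Type where
  | patT : ℕ → Pattern V → List ℕ → TransSpec V E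
  | exprT : ℕ → E → TransSpec V E

/-- The variable at which a transition acts. -/
def TransSpec.tvar {V E : Type} : TransSpec V E → ℕ
  | .patT x _ _ => x
  | .exprT x _ => x

/-- `t.introduces y`: the transition `t` introduces the variable `y`
(pattern transitions introduce the variables of their fresh children). -/
def TransSpec.introduces {V E : Type} : TransSpec V E → ℕ → Prop
  | .patT _ _ xs, y => y ∈ xs
  | .exprT _ _, _ => False

/-- The dependency ordering on transitions: `t₂` depends on `t₁` iff `t₁`
introduces the variable at which `t₂` acts, or `t₂` is an expression transition
`x ← e` and `t₁` introduces some variable used by `e`. -/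
def TransDependsOn {V E : Type} (exprVars : E → List ℕ) (t₁ t₂ : TransSpec V E) : Prop :=
  t₁.introduces t₂.tvar ∨
    (match t₂ with
     | .exprT _ e => ∃ y ∈ exprVars e, t₁.introduces y
     | .patT _ _ _ => False)

/-- The set `Δ(m)` of minimal transitions of a model `m`: one pattern transition
`x ← P` for each pattern node `m.x = P(m₁,…,m_k)`, and one expression transition
`x ← e` for each expression node `m.x = e`. -/
def Model.specs {V E : Type} : Model V E → List (TransSpec V E)
  | .unknown _ => []
  | .expr x e => [.exprT x e]
  | .pat x P ms => .patT x P (ms.map Model.rootVar) ::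
      (ms.attach.map (fun m => m.1.specs)).flatten
decreasing_by
  simp_wf
  have := List.sizeOf_lt_of_mem m.2
  omega

/-- Applying a transition specification to a task model, as a minimal transition:
the unknown leaf at the transition's variable (in the input or output model) is
replaced by the specified submodel, subject to the minimal-transition side
conditions (freshness of the pattern children variables; expression variables
introduced in the input model). -/
inductive ApplySpec {V E : Type} (exprVars : E → List ℕ) :
    TaskModel V E → TransSpec V E → TaskModel V E → Prop where
  | patInput (M : TaskModel V E) (x : ℕ) (P : Pattern V) (xs : List ℕ) (mi' : Model V E) :
      xs.Nodup →
      (∀ y ∈ xs, y ∉ M.input.vars ∧ y ∉ M.output.vars) →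
      Model.ReplaceAt M.input x (.pat x P (xs.map .unknown)) mi' →
      ApplySpec exprVars M (.patT x P xs) ⟨mi', M.output⟩
  | patOutput (M : TaskModel V E) (x : ℕ) (P : Pattern V) (xs : List ℕ) (mo' : Model V E) :
      xs.Nodup →
      (∀ y ∈ xs, y ∉ M.input.vars ∧ y ∉ M.output.vars) →
      Model.ReplaceAt M.output x (.pat x P (xs.map .unknown)) mo' →
      ApplySpec exprVars M (.patT x P xs) ⟨M.input, mo'⟩
  | exprInput (M : TaskModel V E) (x : ℕ) (e : E) (mi' : Model V E) :
      (∀ y ∈ exprVars e, y ∈ M.input.vars) →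
      Model.ReplaceAt M.input x (.expr x e) mi' →
      ApplySpec exprVars M (.exprT x e) ⟨mi', M.output⟩
  | exprOutput (M : TaskModel V E) (x : ℕ) (e : E) (mo' : Model V E) :
      (∀ y ∈ exprVars e, y ∈ M.input.vars) →
      Model.ReplaceAt M.output x (.expr x e) mo' →
      ApplySpec exprVars M (.exprT x e) ⟨M.input, mo'⟩

/-- `Chain exprVars M L M'`: applying the transitions of the list `L` in order
leads from the task model `M` to the task model `M'`, each step being a valid
minimal transition producing a well-formed task model. -/
inductive Chain {V E : Type} (exprVars : E → List ℕ) :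
    TaskModel V E → List (TransSpec V E) → TaskModel V E → Prop where
  | nil (M : TaskModel V E) : Chain exprVars M [] M
  | cons (M M' M'' : TaskModel V E) (t : TransSpec V E) (ts : List (TransSpec V E)) :
      ApplySpec exprVars M t M' →
      TaskModel.Wf exprVars M' →
      Chain exprVars M' ts M'' →
      Chain exprVars M (t :: ts) M''

/-!
The path is built backwards. No transition of `Δ(M)` depends on the last one, `t`, of a compatible
ordering. Since the variables introduced by `t` carry no transition of their own, the node of `M`
at which `t` acts has only unknown children, so it can be collapsed to an unknown leaf, giving a
task model `M'` from which `t` leads to `M`. Since no expression uses the variables introduced by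
`t`, the task model `M'` is well-formed. Finally `Δ(M') = Δ(M) \ {t}`, and `M'` has the same root
variables as `M`, so induction applies to `M'`.
-/

theorem flatMap_set_perm {α β : Type*} {f : α → List β} {as : List α} {i : ℕ} (hi : i < as.length)
    {a : α} {l l' : List β} (h : (l ++ f a).Perm (l' ++ f as[i])) :
    (l ++ (as.set i a).flatMap f).Perm (l' ++ as.flatMap f) := by
  have hsplit : as.flatMap f =
      (as.take i).flatMap f ++ (f as[i] ++ (as.drop (i + 1)).flatMap f) := by
    rw [← List.flatMap_cons, ← List.flatMap_append, List.getElem_cons_drop,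
      List.take_append_drop]
  rw [List.set_eq_take_append_cons_drop, if_pos hi, hsplit, List.flatMap_append,
    List.flatMap_cons, ← Multiset.coe_eq_coe]
  rw [← Multiset.coe_eq_coe] at h
  simp only [← Multiset.coe_add] at h ⊢
  rw [add_left_comm, ← add_assoc (l : Multiset β), h]
  abel

/-- A list is ordered compatibly with a relation `r` if `r a b` forces `a` to come strictly before
`b`; indices are compared, so that repeated elements are told apart. -/
def CompatiblyOrdered {α : Type*} (r : α → α → Prop) (l : List α) : Prop :=
  ∀ (i j : ℕ) (hi : i < l.length) (hj : j < l.length), r (l.get ⟨i, hi⟩) (l.get ⟨j, hj⟩) → i < j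

namespace CompatiblyOrdered

variable {α : Type*} {r : α → α → Prop} {l : List α} {a b : α}

theorem of_concat (h : CompatiblyOrdered r (l ++ [a])) : CompatiblyOrdered r l :=
  fun i j hi hj hr => h i j (by simp; omega) (by simp; omega) (by simpa [hi, hj] using hr)

theorem not_rel_of_concat (h : CompatiblyOrdered r (l ++ [a])) (hb : b ∈ l ++ [a]) : ¬ r a b := by
  intro hr
  obtain ⟨j, hj, rfl⟩ := List.mem_iff_getElem.1 hb
  have hlt : l.length < j := h l.length j (by simp) hj (by simpa using hr)
  rw [List.length_append, List.length_singleton] at hj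
  omega

end CompatiblyOrdered

section

variable {V E : Type}

namespace TransSpec

/-- The list form of `TransSpec.introduces`: the variables of the fresh unknown leaves which a
transition creates. -/
def newVars : TransSpec V E → List ℕ
  | .patT _ _ xs => xs
  | .exprT _ _ => []

/-- The variables used by the expression of an expression transition; a pattern transition uses
none. -/
def usedVars (exprVars : E → List ℕ) : TransSpec V E → List ℕ
  | .patT _ _ _ => []
  | .exprT _ e => exprVars e

/-- The submodel which a transition puts in place of an unknown leaf. -/
def newModel : TransSpec V E → Model V E
  | .patT x P xs => .pat x P (xs.map .unknown)
  | .exprT x e => .expr x e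

theorem introduces_iff {t : TransSpec V E} {y : ℕ} : t.introduces y ↔ y ∈ t.newVars := by
  cases t <;> simp [introduces, newVars]

end TransSpec

theorem transDependsOn_iff {exprVars : E → List ℕ} {t s : TransSpec V E} :
    TransDependsOn exprVars t s ↔
      s.tvar ∈ t.newVars ∨ ∃ y ∈ s.usedVars exprVars, y ∈ t.newVars := by
  cases s <;> simp [TransDependsOn, TransSpec.introduces_iff, TransSpec.usedVars]

namespace Model

@[induction_eliminator]
theorem induction_on_children {p : Model V E → Prop} (unknown : ∀ x, p (.unknown x))
    (expr : ∀ x e, p (.expr x e)) (pat : ∀ x P ms, (∀ m ∈ ms, p m) → p (.pat x P ms)) :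
    ∀ m, p m
  | .unknown x => unknown x
  | .expr x e => expr x e
  | .pat x P ms => pat x P ms fun m _ => induction_on_children unknown expr pat m

@[simp]
theorem vars_unknown (x : ℕ) : (unknown x : Model V E).vars = [x] := by
  rw [vars]

@[simp]
theorem vars_expr (x : ℕ) (e : E) : (expr x e : Model V E).vars = [x] := by
  rw [vars]

@[simp]
theorem vars_pat (x : ℕ) (P : Pattern V) (ms : List (Model V E)) :
    (pat x P ms).vars = x :: ms.flatMap vars := by
  rw [vars, List.attach_map_val, List.flatMap_def]

@[simp]
theorem exprs_unknown (x : ℕ) : (unknown x : Model V E).exprs = [] := by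
  rw [exprs]

@[simp]
theorem exprs_expr (x : ℕ) (e : E) : (expr x e : Model V E).exprs = [e] := by
  rw [exprs]

@[simp]
theorem exprs_pat (x : ℕ) (P : Pattern V) (ms : List (Model V E)) :
    (pat x P ms).exprs = ms.flatMap exprs := by
  rw [exprs, List.attach_map_val, List.flatMap_def]

@[simp]
theorem specs_unknown (x : ℕ) : (unknown x : Model V E).specs = [] := by
  rw [specs]

@[simp]
theorem specs_expr (x : ℕ) (e : E) : (expr x e : Model V E).specs = [.exprT x e] := by
  rw [specs]

@[simp]
theorem specs_pat (x : ℕ) (P : Pattern V) (ms : List (Model V E)) :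
    (pat x P ms).specs = .patT x P (ms.map rootVar) :: ms.flatMap specs := by
  rw [specs, List.attach_map_val, List.flatMap_def]

theorem mem_specs_pat_of_mem {x : ℕ} {P : Pattern V} {ms : List (Model V E)} {m : Model V E}
    {t : TransSpec V E} (hm : m ∈ ms) (ht : t ∈ m.specs) : t ∈ (pat x P ms).specs := by
  rw [specs_pat]
  exact List.mem_cons_of_mem _ (List.mem_flatMap_of_mem hm ht)

theorem flatMap_usedVars_specs (exprVars : E → List ℕ) (m : Model V E) :
    m.specs.flatMap (TransSpec.usedVars exprVars) = m.exprs.flatMap exprVars := by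
  induction m with
  | unknown x => simp
  | expr x e => simp [TransSpec.usedVars]
  | pat x P ms ih =>
    simp only [specs_pat, exprs_pat, List.flatMap_cons, TransSpec.usedVars, List.nil_append,
      List.flatMap_assoc]
    exact List.flatMap_congr ih

theorem eq_unknown_of_forall_tvar_ne {m : Model V E} (h : ∀ t ∈ m.specs, t.tvar ≠ m.rootVar) :
    m = .unknown m.rootVar := by
  cases m <;> simp_all [TransSpec.tvar, rootVar]

namespace ReplaceAt

variable {m m₀ m' : Model V E} {x : ℕ}

theorem vars_perm (h : ReplaceAt m x m₀ m') : (x :: m'.vars).Perm (m₀.vars ++ m.vars) := by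
  induction h with
  | here x m₀ => simpa using (List.perm_append_singleton x m₀.vars).symm
  | there y P ms i hi x m₀ r _ ih =>
    have hchildren := flatMap_set_perm (l := [x]) hi ih
    simpa using ((List.Perm.swap y x _).trans (hchildren.cons y)).trans List.perm_middle.symm

theorem rootVar_eq (h : ReplaceAt m x m₀ m') (h₀ : m₀.rootVar = x) : m'.rootVar = m.rootVar := by
  cases h with
  | here => exact h₀
  | there => rfl

theorem specs_perm (h : ReplaceAt m x m₀ m') (h₀ : m₀.rootVar = x) :
    m'.specs.Perm (m₀.specs ++ m.specs) := by
  induction h with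
  | here x m₀ => simp
  | there y P ms i hi x m₀ r hr ih =>
    have hroots : (ms.set i r).map rootVar = ms.map rootVar := by
      rw [List.map_set, hr.rootVar_eq h₀, ← List.map_set, List.get_eq_getElem,
        List.set_getElem_self]
    have hchildren := flatMap_set_perm (l := []) hi (ih h₀)
    simpa [hroots] using (hchildren.cons _).trans List.perm_middle.symm

end ReplaceAt

theorem exists_replaceAt_of_mem_specs {m : Model V E} {t : TransSpec V E} (ht : t ∈ m.specs)
    (hnew : ∀ s ∈ m.specs, s.tvar ∉ t.newVars) :
    ∃ m', ReplaceAt m' t.tvar t.newModel m := by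
  induction m with
  | unknown x => simp at ht
  | expr x e =>
    obtain rfl : t = .exprT x e := by simpa using ht
    exact ⟨.unknown x, .here _ _⟩
  | pat x P ms ih =>
    rw [specs_pat, List.mem_cons, List.mem_flatMap] at ht
    rcases ht with rfl | ⟨m, hm, htm⟩
    · have hunknown : ∀ m ∈ ms, unknown m.rootVar = m := fun m hm =>
        (eq_unknown_of_forall_tvar_ne fun s hs heq =>
          hnew s (mem_specs_pat_of_mem hm hs) (heq ▸ List.mem_map_of_mem hm)).symm
      have hms : (ms.map rootVar).map unknown = ms := by
        rw [List.map_map]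
        exact (List.map_congr_left hunknown).trans (List.map_id ms)
      refine ⟨.unknown x, ?_⟩
      rw [TransSpec.newModel, hms]
      exact .here _ _
    · obtain ⟨m', hm'⟩ := ih m hm htm fun s hs => hnew s (mem_specs_pat_of_mem hm hs)
      obtain ⟨i, hi, rfl⟩ := List.mem_iff_getElem.1 hm
      refine ⟨.pat x P (ms.set i m'), ?_⟩
      have hstep := ReplaceAt.there x P (ms.set i m') i (by simpa) t.tvar _ _ (by simpa using hm')
      rwa [List.set_set, List.set_getElem_self] at hstep

end Model

namespace TransSpec

theorem vars_newModel (t : TransSpec V E) : t.newModel.vars = t.tvar :: t.newVars := by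
  cases t <;> simp [newModel, tvar, newVars, List.flatMap_map]

theorem rootVar_newModel (t : TransSpec V E) : t.newModel.rootVar = t.tvar := by
  cases t <;> rfl

theorem specs_newModel (t : TransSpec V E) : t.newModel.specs = [t] := by
  cases t <;> simp [newModel, List.flatMap_map, Function.comp_def, Model.rootVar]

end TransSpec

namespace Model.ReplaceAt

variable {m m' : Model V E} {t : TransSpec V E}

theorem vars_perm_newVars_append (h : ReplaceAt m t.tvar t.newModel m') :
    m'.vars.Perm (t.newVars ++ m.vars) :=
  (List.perm_cons t.tvar).1 (by simpa [TransSpec.vars_newModel] using h.vars_perm)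

theorem specs_perm_cons (h : ReplaceAt m t.tvar t.newModel m') : m'.specs.Perm (t :: m.specs) := by
  simpa [TransSpec.specs_newModel] using h.specs_perm t.rootVar_newModel

end Model.ReplaceAt

namespace TaskModel

/-- The variables `X_M` of a task model. -/
def vars (M : TaskModel V E) : List ℕ :=
  M.input.vars ++ M.output.vars

/-- The set `Δ(M)` of minimal transitions of a task model, as a list. -/
def specs (M : TaskModel V E) : List (TransSpec V E) :=
  M.input.specs ++ M.output.specs

/-- The initial task model `M₀ = (x₁ : ?, x₂ : ?)` of the paths leading to `M`. -/
def initial (M : TaskModel V E) : TaskModel V E :=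
  ⟨.unknown M.input.rootVar, .unknown M.output.rootVar⟩

theorem initial_eq_self {M : TaskModel V E} (h : M.specs = []) : M.initial = M := by
  obtain ⟨hin, hout⟩ := List.append_eq_nil_iff.1 h
  rw [initial, ← Model.eq_unknown_of_forall_tvar_ne (by simp [hin]),
    ← Model.eq_unknown_of_forall_tvar_ne (by simp [hout])]

theorem wf_iff {exprVars : E → List ℕ} {M : TaskModel V E} : M.Wf exprVars ↔
    M.vars.Nodup ∧ ∀ s ∈ M.specs, ∀ y ∈ s.usedVars exprVars, y ∈ M.input.vars := by
  have hexprs (m : Model V E) : (∀ s ∈ m.specs, ∀ y ∈ s.usedVars exprVars, y ∈ M.input.vars) ↔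
      ∀ e ∈ m.exprs, ∀ y ∈ exprVars e, y ∈ M.input.vars := by
    rw [← List.forall_mem_flatMap, ← List.forall_mem_flatMap, m.flatMap_usedVars_specs]
  simp only [Wf, vars, specs, List.mem_append, or_imp, forall_and, hexprs]

end TaskModel

/-- The effect of a transition `t`, replacing an unknown leaf in one of the two components of a
task model, without the side conditions on variables which `ApplySpec` imposes. -/
inductive TransSpec.Expands (t : TransSpec V E) : TaskModel V E → TaskModel V E → Prop where
  | input {m m' : Model V E} (n : Model V E) :
      m.ReplaceAt t.tvar t.newModel m' → Expands t ⟨m, n⟩ ⟨m', n⟩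
  | output {m m' : Model V E} (n : Model V E) :
      m.ReplaceAt t.tvar t.newModel m' → Expands t ⟨n, m⟩ ⟨n, m'⟩

namespace TransSpec.Expands

variable {t : TransSpec V E} {M M' : TaskModel V E}

theorem vars_perm (h : t.Expands M M') : M'.vars.Perm (t.newVars ++ M.vars) := by
  cases h with
  | input n h => simpa [TaskModel.vars] using h.vars_perm_newVars_append.append_right n.vars
  | output n h =>
    exact (h.vars_perm_newVars_append.append_left n.vars).trans (List.perm_append_comm_assoc _ _ _)

theorem input_vars_subset (h : t.Expands M M') : M'.input.vars ⊆ t.newVars ++ M.input.vars := by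
  cases h with
  | input n h => exact h.vars_perm_newVars_append.subset
  | output n h => exact List.subset_append_right _ _

theorem specs_perm (h : t.Expands M M') : M'.specs.Perm (t :: M.specs) := by
  cases h with
  | input n h => exact h.specs_perm_cons.append_right n.specs
  | output n h => exact (h.specs_perm_cons.append_left n.specs).trans List.perm_middle

theorem initial_eq (h : t.Expands M M') : M'.initial = M.initial := by
  cases h with
  | input n h | output n h => simp only [TaskModel.initial, h.rootVar_eq t.rootVar_newModel]

theorem applySpec {exprVars : E → List ℕ} (h : t.Expands M M')
    (hfresh : (t.newVars ++ M.vars).Nodup)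
    (hused : ∀ y ∈ t.usedVars exprVars, y ∈ M.input.vars) : ApplySpec exprVars M t M' := by
  obtain ⟨hnodup, -, hdisjoint⟩ := List.nodup_append'.1 hfresh
  have hnotMem : ∀ y ∈ t.newVars, y ∉ M.input.vars ∧ y ∉ M.output.vars := fun y hy => by
    simpa [TaskModel.vars] using hdisjoint hy
  cases t with
  | patT x P xs =>
    cases h with
    | input n h => exact .patInput _ x P xs _ hnodup hnotMem h
    | output n h => exact .patOutput _ x P xs _ hnodup hnotMem h
  | exprT x e =>
    cases h with
    | input n h => exact .exprInput _ x e _ hused h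
    | output n h => exact .exprOutput _ x e _ hused h

end TransSpec.Expands

theorem TaskModel.exists_expands {M : TaskModel V E} {t : TransSpec V E} (ht : t ∈ M.specs)
    (hnew : ∀ s ∈ M.specs, s.tvar ∉ t.newVars) : ∃ M', t.Expands M' M := by
  rcases List.mem_append.1 ht with ht | ht
  · obtain ⟨m, hm⟩ := Model.exists_replaceAt_of_mem_specs ht fun s hs =>
      hnew s (List.mem_append_left _ hs)
    exact ⟨⟨m, M.output⟩, .input _ hm⟩
  · obtain ⟨m, hm⟩ := Model.exists_replaceAt_of_mem_specs ht fun s hs =>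
      hnew s (List.mem_append_right _ hs)
    exact ⟨⟨M.input, m⟩, .output _ hm⟩

theorem TaskModel.Wf.applySpec_of_expands {exprVars : E → List ℕ} {M M' : TaskModel V E}
    {t : TransSpec V E} (hwf : M.Wf exprVars) (h : t.Expands M' M)
    (hlast : ∀ s ∈ M.specs, ¬ TransDependsOn exprVars t s) :
    M'.Wf exprVars ∧ ApplySpec exprVars M' t M := by
  obtain ⟨hnodup, hused⟩ := wf_iff.1 hwf
  have hfresh : (t.newVars ++ M'.vars).Nodup := h.vars_perm.nodup_iff.1 hnodup
  have hused' : ∀ s ∈ M.specs, ∀ y ∈ s.usedVars exprVars, y ∈ M'.input.vars :=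
    fun s hs y hy => (List.mem_append.1 (h.input_vars_subset (hused s hs y hy))).resolve_left
      fun hnew => hlast s hs (transDependsOn_iff.2 (.inr ⟨y, hy, hnew⟩))
  have hmem : ∀ s ∈ t :: M'.specs, s ∈ M.specs := h.specs_perm.symm.subset
  exact ⟨wf_iff.2 ⟨hfresh.of_append_right, fun s hs => hused' s (hmem s (.tail t hs))⟩,
    h.applySpec hfresh (hused' t (hmem t (.head _)))⟩

theorem Chain.concat {exprVars : E → List ℕ} {M M' M'' : TaskModel V E}
    {ts : List (TransSpec V E)} {t : TransSpec V E} (h : Chain exprVars M ts M')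
    (happly : ApplySpec exprVars M' t M'') (hwf : M''.Wf exprVars) :
    Chain exprVars M (ts ++ [t]) M'' := by
  induction h with
  | nil M => exact .cons _ _ _ t [] happly hwf (.nil M'')
  | cons M N N' s ts hs hN _ ih => exact .cons _ _ _ s (ts ++ [t]) hs hN (ih happly)

end

/-- Let `M` be a (well-formed) task model and `Δ(M)` its set of
minimal transitions (one pattern transition per pattern node of `M` and one
expression transition per expression node of `M`), partially ordered by
dependency. Then every total ordering `L` of `Δ(M)` compatible with this partial
ordering (dependencies come strictly earlier) yields a valid sequence of minimal
transitions leading from the initial task model `M₀ = (x₁ : ?, x₂ : ?)` to `M`: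
applying the transitions in that order produces well-formed task models at every
intermediate step and ends at `M`. -/
theorem linear_extension_yields_valid_path {V E : Type}
    (exprVars : E → List ℕ) (M : TaskModel V E) (hwf : M.Wf exprVars)
    (L : List (TransSpec V E))
    (hperm : L.Perm (M.input.specs ++ M.output.specs))
    (hcompat : ∀ (i j : ℕ) (hi : i < L.length) (hj : j < L.length),
      TransDependsOn exprVars (L.get ⟨i, hi⟩) (L.get ⟨j, hj⟩) → i < j) :
    Chain exprVars ⟨.unknown M.input.rootVar, .unknown M.output.rootVar⟩ L M := by
  change Chain exprVars M.initial L M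
  replace hcompat : CompatiblyOrdered (TransDependsOn exprVars) L := hcompat
  induction L using List.reverseRecOn generalizing M with
  | nil =>
    rw [TaskModel.initial_eq_self hperm.nil_eq.symm]
    exact .nil M
  | append_singleton L t ih =>
    have hlast : ∀ s ∈ M.specs, ¬ TransDependsOn exprVars t s := fun s hs =>
      hcompat.not_rel_of_concat (hperm.mem_iff.2 hs)
    obtain ⟨M', hM'⟩ := TaskModel.exists_expands (hperm.subset (by simp)) fun s hs h =>
      hlast s hs (transDependsOn_iff.2 (.inl h))
    obtain ⟨hwf', happly⟩ := hwf.applySpec_of_expands hM' hlast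
    have hperm' : L.Perm M'.specs := (List.perm_cons t).1 <|
      (List.perm_append_singleton t L).symm.trans (hperm.trans hM'.specs_perm)
    have hchain : Chain exprVars M'.initial L M' := ih M' hwf' hperm' hcompat.of_concat
    rw [hM'.initial_eq]
    exact hchain.concat happly hwf
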